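/- arXiv:1904.08909 — 3 statements merged into one kernel-verified Lean document; each statement's English description precedes it below -/
import Mathlib

section
/- Let C be a fusion category and let τ be an object of C satisfying τ⊗τ ≅ 𝟙 ⊕ τ. Then for any objects X, Y of C, if τ⊗X ≅ τ⊗Y then X ≅ Y. -/
/-!
Tensoring `τ ⊗ X ≅ τ ⊗ Y` once more with `τ` and using `τ ⊗ τ ≅ 𝟙 ⊞ τ` gives
`X ⊞ (τ ⊗ X) ≅ Y ⊞ (τ ⊗ Y)`: tensoring with a dualizable object is a left adjoint, hence preserves
biproducts. As `τ ⊗ X ≅ τ ⊗ Y`, it remains to cancel the summand `Z = τ ⊗ X` from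
`Z ⊞ X ≅ Z ⊞ Y`.

The cancellation uses only that `End Z` is a finite-dimensional `ℂ`-algebra, hence has stable
range one: if `a * x + b * z = 1` then `a + b * y` is a unit for some `y`. This property holds for
endomorphisms of a finite-dimensional vector space by a dimension count, so for finite products of
matrix algebras over `ℂ`, i.e. (Wedderburn–Artin) for semisimple finite-dimensional `ℂ`-algebras,
and it lifts along the quotient by the nilpotent Jacobson radical. Given an isomorphism
`Z ⊞ X ≅ Z ⊞ Y`, stable range one of `End Z` yields an elementary automorphism of `Z ⊞ X`
after which the `Z ⟶ Z` entry is invertible, and Gaussian elimination (`Biprod.isoElim`)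
gives `X ≅ Y`.

This route avoids Schur's lemma, for which kernels in `C` would first have to be constructed.
-/


open CategoryTheory CategoryTheory.Limits CategoryTheory.MonoidalCategory

universe v u

attribute [local instance] CategoryTheory.Limits.hasBinaryBiproducts_of_finite_biproducts

/-- Every object decomposes as a finite biproduct of simple objects. -/
def IsSemisimple (C : Type u) [Category.{v} C] [Preadditive C]
    [HasFiniteBiproducts C] : Prop :=
  ∀ X : C, ∃ (n : ℕ) (f : Fin n → C), (∀ i, Simple (f i)) ∧ Nonempty (X ≅ ⨁ f)

/-- Finitely many isomorphism classes of simple objects. -/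
def FiniteRank (C : Type u) [Category.{v} C] [Preadditive C] : Prop :=
  ∃ (n : ℕ) (S : Fin n → C), ∀ X : C, Simple X → ∃ i, Nonempty (X ≅ S i)

/-- A ring has stable range one if any `a`, `b` generating the unit right ideal admit `y` with
`a + b * y` a unit. -/
def StableRangeOne (A : Type*) [Ring A] : Prop :=
  ∀ a b x z : A, a * x + b * z = 1 → ∃ y, IsUnit (a + b * y)

lemma StableRangeOne.of_ringEquiv {A B : Type*} [Ring A] [Ring B] (e : A ≃+* B)
    (h : StableRangeOne B) : StableRangeOne A := by
  intro a b x z hab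
  obtain ⟨y, hy⟩ := h (e a) (e b) (e x) (e z)
    (by rw [← map_mul, ← map_mul, ← map_add, hab, map_one])
  refine ⟨e.symm y, ?_⟩
  have := hy.map e.symm
  simpa using this

lemma StableRangeOne.pi {ι : Type*} {A : ι → Type*} [∀ i, Ring (A i)]
    (h : ∀ i, StableRangeOne (A i)) : StableRangeOne (∀ i, A i) := by
  intro a b x z hab
  choose y hy using fun i => h i (a i) (b i) (x i) (z i) (congrFun hab i)
  exact ⟨y, Pi.isUnit_iff.2 hy⟩

/-- Since `ker a` and `V / range a` have the same dimension and `b` surjects onto the latter, `y`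
can be chosen to vanish on a complement of `ker a` and to make `b ∘ y` map `ker a`
isomorphically onto `V / range a`. -/
lemma StableRangeOne.moduleEnd (K V : Type*) [Field K] [AddCommGroup V] [Module K V]
    [FiniteDimensional K V] : StableRangeOne (Module.End K V) := by
  intro a b x z hab
  let q := (LinearMap.range a).mkQ
  have hqa : ∀ v, q (a v) = 0 := fun v => by simp [q]
  have hqb : LinearMap.range (q ∘ₗ b) = ⊤ := by
    rw [LinearMap.range_eq_top]
    intro w
    obtain ⟨v, rfl⟩ := (LinearMap.range a).mkQ_surjective w
    refine ⟨z v, ?_⟩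
    have hv : a (x v) + b (z v) = v := LinearMap.congr_fun hab v
    calc q (b (z v)) = q (a (x v) + b (z v)) := by rw [map_add, hqa, zero_add]
      _ = q v := by rw [hv]
  obtain ⟨s, hs⟩ := (q ∘ₗ b).exists_rightInverse_of_surjective hqb
  obtain ⟨p, hp⟩ := (LinearMap.ker a).subtype.exists_leftInverse_of_injective
    (LinearMap.ker a).ker_subtype
  have hdim : Module.finrank K (LinearMap.ker a) = Module.finrank K (V ⧸ LinearMap.range a) := by
    have h1 := a.finrank_range_add_finrank_ker
    have h2 := (LinearMap.range a).finrank_quotient_add_finrank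
    omega
  let e := LinearEquiv.ofFinrankEq _ _ hdim
  refine ⟨s ∘ₗ e.toLinearMap ∘ₗ p, ?_⟩
  rw [LinearMap.isUnit_iff_ker_eq_bot, LinearMap.ker_eq_bot']
  intro v hv
  have hv' : a v + b (s (e (p v))) = 0 := hv
  have hsep : ∀ w, q (b (s w)) = w := fun w => LinearMap.congr_fun hs w
  have hpv : p v = 0 := by
    have := congrArg q hv'
    rw [map_add, hqa, zero_add, hsep, map_zero] at this
    simpa using this
  have hav : a v = 0 := by simpa [hpv] using hv'
  have : p v = ⟨v, hav⟩ := LinearMap.congr_fun hp (⟨v, hav⟩ : LinearMap.ker a)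
  rw [hpv] at this
  exact (congrArg Subtype.val this).symm

/-- Units lift modulo the Jacobson radical, because it is nilpotent. -/
lemma isUnit_of_isUnit_mk_jacobson {A : Type*} [Ring A] [IsSemiprimaryRing A] {u : A}
    (hu : IsUnit (Ideal.Quotient.mk (Ring.jacobson A) u)) : IsUnit u := by
  have key : ∀ r : A, Ideal.Quotient.mk (Ring.jacobson A) r = 1 → IsUnit r := by
    intro r hr
    have hmem : r - 1 ∈ Ring.jacobson A := by
      rw [← Ideal.Quotient.eq_zero_iff_mem, map_sub, hr, map_one, sub_self]
    obtain ⟨n, hn⟩ := IsSemiprimaryRing.isNilpotent (R := A)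
    have hnil : IsNilpotent (r - 1) := by
      refine ⟨n, ?_⟩
      have := Ideal.pow_mem_pow hmem n
      rw [hn] at this
      simpa using this
    simpa using hnil.isUnit_add_one
  obtain ⟨w', h1, h2⟩ := isUnit_iff_exists.1 hu
  obtain ⟨w, rfl⟩ := Ideal.Quotient.mk_surjective w'
  obtain ⟨r, hr⟩ := (key (u * w) (by rw [map_mul, h1])).exists_right_inv
  obtain ⟨l, hl⟩ := (key (w * u) (by rw [map_mul, h2])).exists_left_inv
  rw [isUnit_iff_exists_and_exists]
  exact ⟨⟨w * r, by rw [← mul_assoc, hr]⟩, ⟨l * w, by rw [mul_assoc, hl]⟩⟩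

lemma StableRangeOne.of_finiteDimensional (A : Type*) [Ring A] [Algebra ℂ A]
    [FiniteDimensional ℂ A] : StableRangeOne A := by
  have : IsArtinianRing A := IsArtinianRing.of_finite ℂ A
  have hq : StableRangeOne (A ⧸ Ring.jacobson A) := by
    have : FiniteDimensional ℂ (A ⧸ Ring.jacobson A) :=
      Module.Finite.of_surjective (Ideal.Quotient.mkₐ ℂ (Ring.jacobson A)).toLinearMap
        Ideal.Quotient.mk_surjective
    obtain ⟨n, d, _, ⟨e⟩⟩ :=
      IsSemisimpleRing.exists_algEquiv_pi_matrix_of_isAlgClosed ℂ (A ⧸ Ring.jacobson A)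
    exact .of_ringEquiv e.toRingEquiv <| .pi fun i =>
      .of_ringEquiv (Matrix.toLinAlgEquiv' (R := ℂ) (n := Fin (d i))).toRingEquiv <|
        .moduleEnd ℂ _
  intro a b x z hab
  let π := Ideal.Quotient.mk (Ring.jacobson A)
  obtain ⟨y', hy⟩ := hq (π a) (π b) (π x) (π z)
    (by rw [← map_mul, ← map_mul, ← map_add, hab, map_one])
  obtain ⟨y, rfl⟩ := Ideal.Quotient.mk_surjective y'
  exact ⟨y, isUnit_of_isUnit_mk_jacobson (by simpa [π] using hy)⟩

/-- Evans' cancellation theorem: a summand whose endomorphism ring has stable range one can be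
cancelled. -/
lemma biprod_cancel_left {C : Type u} [Category.{v} C] [Preadditive C] [HasBinaryBiproducts C]
    {X Y Z : C} (hZ : StableRangeOne (End Z)) (φ : Z ⊞ X ≅ Z ⊞ Y) : Nonempty (X ≅ Y) := by
  let d : Z ⟶ Z := biprod.inl ≫ φ.hom ≫ biprod.fst
  let c : X ⟶ Z := biprod.inr ≫ φ.hom ≫ biprod.fst
  let d' : Z ⟶ Z := biprod.inl ≫ φ.inv ≫ biprod.fst
  let b' : Z ⟶ X := biprod.inl ≫ φ.inv ≫ biprod.snd
  -- The `Z ⟶ Z` entry of `φ.inv ≫ φ.hom = 𝟙`, through `Z ⊞ X`.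
  have h : d' ≫ d + b' ≫ c = 𝟙 Z := by
    calc d' ≫ d + b' ≫ c
        = biprod.inl ≫ φ.inv ≫ (biprod.fst ≫ biprod.inl + biprod.snd ≫ biprod.inr) ≫
            φ.hom ≫ biprod.fst := by
          simp only [d, d', b', c, Preadditive.comp_add, Preadditive.add_comp, Category.assoc]
      _ = 𝟙 Z := by
          rw [biprod.total, Category.id_comp, Iso.inv_hom_id_assoc, biprod.inl_fst]
  -- In `End Z`, `f * g` is `g ≫ f`.
  obtain ⟨y, hy⟩ := hZ (End.of d) (End.of (b' ≫ c)) (End.of d') 1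
    (by rw [mul_one]; exact h)
  have hy' : IsIso (d + (y : Z ⟶ Z) ≫ b' ≫ c) := (isUnit_iff_isIso _).1 hy
  let ψ : Z ⊞ X ≅ Z ⊞ Y := Biprod.unipotentUpper ((y : Z ⟶ Z) ≫ b') ≪≫ φ
  have hψ : biprod.inl ≫ ψ.hom ≫ biprod.fst = d + (y : Z ⟶ Z) ≫ b' ≫ c := by
    calc biprod.inl ≫ ψ.hom ≫ biprod.fst
        = (biprod.inl ≫ Biprod.ofComponents (𝟙 Z) ((y : Z ⟶ Z) ≫ b') 0 (𝟙 X)) ≫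
            φ.hom ≫ biprod.fst := by
          simp only [ψ, Biprod.unipotentUpper, Iso.trans_hom, Category.assoc]
      _ = d + (y : Z ⟶ Z) ≫ b' ≫ c := by
          simp only [Biprod.inl_ofComponents, Preadditive.add_comp, Category.id_comp,
            Category.assoc, d, c]
  have : IsIso (biprod.inl ≫ ψ.hom ≫ biprod.fst) := by rw [hψ]; exact hy'
  exact ⟨Biprod.isoElim ψ⟩

lemma tensorRight_biprod {C : Type u} [Category.{v} C] [MonoidalCategory C] [Preadditive C]
    [HasBinaryBiproducts C] [RigidCategory C] (A B X : C) :
    Nonempty ((A ⊞ B) ⊗ X ≅ (A ⊗ X) ⊞ (B ⊗ X)) := by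
  have hadj := tensorRightAdjunction X Xᘁ
  have : (tensorRight X).IsLeftAdjoint := hadj.isLeftAdjoint
  have : PreservesColimitsOfSize.{0, 0} (tensorRight X) := hadj.leftAdjoint_preservesColimits
  have : PreservesBinaryBiproduct A B (tensorRight X) :=
    preservesBinaryBiproduct_of_preservesBinaryCoproduct _
  exact ⟨(tensorRight X).mapBiprod A B⟩

/-- If `C` is a fusion category (ℂ-linear, semisimple, rigid, simple unit,
finite-dimensional Homs, finitely many simple classes) and `τ ⊗ τ ≅ 𝟙 ⊞ τ`,
then `τ ⊗ X ≅ τ ⊗ Y` implies `X ≅ Y`. -/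
theorem fib_cancellation (C : Type u) [Category.{v} C] [MonoidalCategory C]
    [Preadditive C] [Linear ℂ C] [HasFiniteBiproducts C] [RigidCategory C]
    [Simple (𝟙_ C)]
    (hfd : ∀ X Y : C, FiniteDimensional ℂ (X ⟶ Y))
    (hss : IsSemisimple C) (hfr : FiniteRank C)
    (τ : C) (hτ : Nonempty (τ ⊗ τ ≅ 𝟙_ C ⊞ τ))
    (X Y : C) (h : Nonempty (τ ⊗ X ≅ τ ⊗ Y)) : Nonempty (X ≅ Y) := by
  obtain ⟨t⟩ := hτ
  obtain ⟨f⟩ := h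
  have expand : ∀ W : C, Nonempty (τ ⊗ (τ ⊗ W) ≅ (τ ⊗ W) ⊞ W) := fun W => by
    obtain ⟨g⟩ := tensorRight_biprod (𝟙_ C) τ W
    exact ⟨(α_ τ τ W).symm ≪≫ whiskerRightIso t W ≪≫ g ≪≫ biprod.braiding _ _ ≪≫
      biprod.mapIso (Iso.refl _) (λ_ W)⟩
  obtain ⟨gX⟩ := expand X
  obtain ⟨gY⟩ := expand Y
  have : FiniteDimensional ℂ (End (τ ⊗ X)) := hfd _ _
  exact biprod_cancel_left (.of_finiteDimensional (End (τ ⊗ X)))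
    (gX.symm ≪≫ whiskerLeftIso τ f ≪≫ gY ≪≫ biprod.mapIso f.symm (Iso.refl Y))
end

section
/- Let C be a semisimple tensor category and let a, b be non-isomorphic Fibonacci objects of C satisfying the braid relation a⊗b⊗a ≅ b⊗a⊗b. Then a⊗b is not isomorphic to b⊗a. -/
/-!
If `a ⊗ b ≅ b ⊗ a`, then `a ⊗ b ⊗ a ≅ a ⊗ (a ⊗ b) ≅ (a ⊗ a) ⊗ b ≅ b ⊞ a ⊗ b`, and similarly
`b ⊗ a ⊗ b ≅ (a ⊗ b) ⊗ b ≅ a ⊗ (b ⊗ b) ≅ a ⊞ a ⊗ b`. The braid relation therefore gives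
`b ⊞ a ⊗ b ≅ a ⊞ a ⊗ b`, and cancelling `a ⊗ b` yields `a ≅ b`.

Tensoring with an object preserves biproducts because rigidity makes it an adjoint functor; no
additivity of the tensor product on morphisms needs to be assumed (`whiskerRight_biprod`,
`whiskerLeft_biprod`).

Cancellation (`cancel_biprod`) holds in any `ℂ`-linear category with finite-dimensional Hom-spaces.
Neither kernels nor split idempotents are at hand, so Schur's lemma and Krull-Schmidt decompositions
are avoided. Instead, `End Z` is a finite-dimensional algebra, hence has stable range one
(`exists_isUnit_add_mul`), so an isomorphism `Z ⊞ X ≅ Z ⊞ Y` can be modified by a unipotent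
automorphism to make its `Z ⟶ Z` entry invertible; Gaussian elimination then gives `X ≅ Y`.
-/

open CategoryTheory CategoryTheory.Limits CategoryTheory.MonoidalCategory

universe v u

attribute [local instance] CategoryTheory.Limits.hasBinaryBiproducts_of_finite_biproducts

/-- A Fibonacci object: simple, self-dual, with `τ ⊗ τ ≅ 𝟙 ⊞ τ`. -/
def IsFibonacci {C : Type u} [Category.{v} C] [MonoidalCategory C] [Preadditive C]
    [HasFiniteBiproducts C] [RigidCategory C] (τ : C) : Prop :=
  Simple τ ∧ Nonempty (τ ≅ τᘁ) ∧ Nonempty (τ ⊗ τ ≅ 𝟙_ C ⊞ τ)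

/-- The cyclic word of length `n` starting at `a` and following the cycle
`a → b → c → a`; `cyclicWord 0 a b c` is the tensor unit. -/
def cyclicWord {C : Type u} [Category.{v} C] [MonoidalCategory C] :
    ℕ → C → C → C → C
  | 0, _, _, _ => 𝟙_ C
  | n + 1, a, b, c => a ⊗ cyclicWord n b c a

theorem finite_spectrum_of_finiteDimensional {A : Type*} [Ring A] [Algebra ℂ A]
    [FiniteDimensional ℂ A] (x : A) : (spectrum ℂ x).Finite := by
  rcases subsingleton_or_nontrivial A with h | h
  · simp [spectrum.of_subsingleton]
  -- Every spectral value is a root of the minimal polynomial.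
  · have hne : minpoly ℂ x ≠ 0 := minpoly.ne_zero (Algebra.IsIntegral.isIntegral x)
    refine (minpoly ℂ x).rootSet_finite ℂ |>.subset fun k hk => ?_
    have := spectrum.subset_polynomial_aeval x (minpoly ℂ x) ⟨k, hk, rfl⟩
    rw [minpoly.aeval, spectrum.zero_eq] at this
    rw [Polynomial.mem_rootSet]
    exact ⟨hne, by simpa [Polynomial.aeval_def] using this⟩

/-- A form of the stable range one condition for finite-dimensional algebras,
for the pair `(p, 1 - q * p)`, which generates the unit left ideal as `q * p + (1 - q * p) = 1`. -/
theorem exists_isUnit_add_mul {A : Type*} [Ring A] [Algebra ℂ A] [FiniteDimensional ℂ A]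
    (p q : A) : ∃ t : A, IsUnit (p + t * (1 - q * p)) := by
  have hfin : ({0} ∪ spectrum ℂ q ∪ (·⁻¹) '' spectrum ℂ p).Finite :=
    ((Set.finite_singleton _).union (finite_spectrum_of_finiteDimensional q)).union
      ((finite_spectrum_of_finiteDimensional p).image _)
  obtain ⟨μ, hμ⟩ := hfin.exists_notMem
  simp only [Set.mem_union, Set.mem_singleton_iff, Set.mem_image, not_or, not_exists,
    not_and] at hμ
  obtain ⟨⟨h0, hq⟩, hp⟩ := hμ
  have hqu : IsUnit (q - algebraMap ℂ A μ) := by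
    rw [spectrum.notMem_iff] at hq
    simpa using hq.neg
  have hpu : IsUnit (1 - algebraMap ℂ A μ * p) := by
    have h1 : μ⁻¹ ∉ spectrum ℂ p := fun h => hp _ h (inv_inv μ)
    rw [spectrum.notMem_iff] at h1
    have h2 := ((isUnit_iff_ne_zero.mpr h0).map (algebraMap ℂ A)).mul h1
    rwa [mul_sub, ← map_mul, mul_inv_cancel₀ h0, map_one] at h2
  obtain ⟨w, hw⟩ := hqu
  -- With `t = (q - μ)⁻¹` one has `1 - t * q = -μ * t`, so the element factors as `t * (1 - μ * p)`.
  refine ⟨↑w⁻¹, ?_⟩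
  have key : p + ↑w⁻¹ * (1 - q * p) = ↑w⁻¹ * (1 - algebraMap ℂ A μ * p) := by
    calc p + ↑w⁻¹ * (1 - q * p) = ↑w⁻¹ * (↑w * p) + ↑w⁻¹ * (1 - q * p) := by
          rw [Units.inv_mul_cancel_left]
      _ = _ := by rw [hw]; noncomm_ring
  rw [key]
  exact w⁻¹.isUnit.mul hpu

/-- Cancellation of biproduct summands with finite-dimensional endomorphism algebra. -/
theorem cancel_biprod {C : Type u} [Category.{v} C] [Preadditive C] [Linear ℂ C]
    [HasFiniteBiproducts C] {X Y Z : C} (hZ : FiniteDimensional ℂ (Z ⟶ Z))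
    (φ : Z ⊞ X ≅ Z ⊞ Y) : Nonempty (X ≅ Y) := by
  have : FiniteDimensional ℂ (End Z) := hZ
  obtain ⟨t, ht⟩ := exists_isUnit_add_mul
    (End.of (biprod.inl ≫ φ.hom ≫ biprod.fst)) (End.of (biprod.inl ≫ φ.inv ≫ biprod.fst))
  rw [isUnit_iff_isIso] at ht
  -- The `(1, 1)` entry of `φ.hom ≫ φ.inv = 𝟙`.
  have h : (biprod.inl ≫ φ.hom ≫ biprod.fst) ≫ biprod.inl ≫ φ.inv ≫ biprod.fst +
      (biprod.inl ≫ φ.hom ≫ biprod.snd) ≫ biprod.inr ≫ φ.inv ≫ biprod.fst = 𝟙 Z := by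
    have h1 : (biprod.inl : Z ⟶ Z ⊞ X) ≫ φ.hom ≫
        (biprod.fst ≫ biprod.inl + biprod.snd ≫ biprod.inr) ≫ φ.inv ≫ biprod.fst = 𝟙 Z := by
      simp [biprod.total]
    simpa only [Preadditive.add_comp, Preadditive.comp_add, Category.assoc] using h1
  let ψ : Z ⊞ X ≅ Z ⊞ Y :=
    φ ≪≫ Biprod.unipotentLower ((biprod.inr ≫ φ.inv ≫ biprod.fst) ≫ End.asHom t)
  have hψ : IsIso (biprod.inl ≫ ψ.hom ≫ biprod.fst) := by
    convert ht using 1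
    simp only [End.mul_def, End.one_def, ← h, End.of]
    simp [ψ, Biprod.unipotentLower, Biprod.ofComponents]
  exact ⟨Biprod.isoElim ψ⟩

section Whisker

variable {C : Type u} [Category.{v} C] [MonoidalCategory C] [Preadditive C]
  [HasFiniteBiproducts C] [RigidCategory C]

theorem whiskerLeft_biprod (W X Y : C) : Nonempty (W ⊗ (X ⊞ Y) ≅ (W ⊗ X) ⊞ (W ⊗ Y)) := by
  have : HasZeroObject C := hasZeroObject_of_hasFiniteBiproducts C
  have : (tensorLeft W).IsLeftAdjoint := (tensorLeftAdjunction (ᘁW) W).isLeftAdjoint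
  have := preservesBinaryBiproducts_of_preservesBinaryCoproducts (tensorLeft W)
  exact ⟨(tensorLeft W).mapBiprod X Y⟩

theorem whiskerRight_biprod (W X Y : C) : Nonempty ((X ⊞ Y) ⊗ W ≅ (X ⊗ W) ⊞ (Y ⊗ W)) := by
  have : HasZeroObject C := hasZeroObject_of_hasFiniteBiproducts C
  have : (tensorRight W).IsLeftAdjoint := (tensorRightAdjunction W Wᘁ).isLeftAdjoint
  have := preservesBinaryBiproducts_of_preservesBinaryCoproducts (tensorRight W)
  exact ⟨(tensorRight W).mapBiprod X Y⟩

end Whisker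

/-- If `a, b` are non-isomorphic Fibonacci objects in a semisimple tensor category
satisfying the braid relation `a ⊗ b ⊗ a ≅ b ⊗ a ⊗ b`, then `a ⊗ b ≇ b ⊗ a`. -/
theorem braided_fib_not_commute (C : Type u) [Category.{v} C] [MonoidalCategory C]
    [Preadditive C] [Linear ℂ C] [HasFiniteBiproducts C] [RigidCategory C]
    [Simple (𝟙_ C)]
    (hfd : ∀ X Y : C, FiniteDimensional ℂ (X ⟶ Y))
    (hss : IsSemisimple C)
    (a b : C) (ha : IsFibonacci a) (hb : IsFibonacci b)
    (hab : ¬ Nonempty (a ≅ b))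
    (hbraid : Nonempty (a ⊗ b ⊗ a ≅ b ⊗ a ⊗ b)) :
    ¬ Nonempty (a ⊗ b ≅ b ⊗ a) := by
  rintro ⟨σ⟩
  obtain ⟨β⟩ := hbraid
  obtain ⟨-, -, ⟨fa⟩⟩ := ha
  obtain ⟨-, -, ⟨fb⟩⟩ := hb
  obtain ⟨dr⟩ := whiskerRight_biprod b (𝟙_ C) a
  obtain ⟨dl⟩ := whiskerLeft_biprod a (𝟙_ C) b
  let ea : a ⊗ b ⊗ a ≅ b ⊞ (a ⊗ b) :=
    whiskerLeftIso a σ.symm ≪≫ (α_ a a b).symm ≪≫ whiskerRightIso fa b ≪≫ dr ≪≫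
      biprod.mapIso (λ_ b) (Iso.refl _)
  let eb : b ⊗ a ⊗ b ≅ a ⊞ (a ⊗ b) :=
    (α_ b a b).symm ≪≫ whiskerRightIso σ.symm b ≪≫ α_ a b b ≪≫ whiskerLeftIso a fb ≪≫ dl ≪≫
      biprod.mapIso (ρ_ a) (Iso.refl _)
  exact hab (cancel_biprod (hfd (a ⊗ b) (a ⊗ b))
    (biprod.braiding _ _ ≪≫ eb.symm ≪≫ β.symm ≪≫ ea ≪≫ biprod.braiding _ _))
end

section
/- Let C be a semisimple tensor category containing 2N pairwise non-isomorphic Fibonacci objects τ_1, φ_1, …, τ_N, φ_N such that τ_i⊗φ_i⊗τ_i ≅ φ_i⊗τ_i⊗φ_i for every i, and such that for all i ≠ j each of τ_i, φ_i ⊗-commutes with each of τ_j, φ_j. Then any two non-identical source-simple words in these objects are non-isomorphic. -/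
/-!
The argument takes place in the monoid of isomorphism classes of objects under `⊗`.

Direct summands cancel: `Z ⊞ X ≅ Z ⊞ Y` implies `X ≅ Y` (`biprod_cancel`), because `End Z` is a
finite-dimensional algebra and so has stable range one (Evans' cancellation theorem). As
`T ⊗ T ⊗ X ≅ (T ⊗ X) ⊞ X` for a Fibonacci object `T`, the class of `T` is cancellable under `⊗`
(`fib_isRegular`).

If two words `l₁`, `l₂` are isomorphic and differ in their `i`-th subwords `a ≠ b`, moving the letters
of index `i` to the front (`word_prod_split`) gives `a c = b d`, where `c` and `d` are products of
letters of other indices: they are cancellable and commute with `t = τ i` and `f = φ i`. Heuristically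
`b⁻¹ a = d c⁻¹` commutes with `t` and `f`, while no quotient of two of the words
`1, t, f, t f, f t, t f t` is central unless `t f = f t`; inspecting the pairs and using only
`t f t = f t f` and cancellation gives `t f = f t` (`comm_of_words_eq`). But then
`t f ⊞ f ≅ t t f ≅ t f t ≅ f t f ≅ f f t ≅ t f ⊞ t`, so `τ i ≅ φ i` (`fib_iso_of_commute`), contrary to
hypothesis.
-/

open CategoryTheory CategoryTheory.Limits CategoryTheory.MonoidalCategory

universe v u

attribute [local instance] CategoryTheory.Limits.hasBinaryBiproducts_of_finite_biproducts

/-- The tensor product of a list of objects (the empty product is the unit). -/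
def tensorList {C : Type u} [Category.{v} C] [MonoidalCategory C] : List C → C
  | [] => 𝟙_ C
  | [x] => x
  | x :: y :: xs => x ⊗ tensorList (y :: xs)

/-- The object corresponding to a letter: `(i, true)` is `τ i` and `(i, false)` is `φ i`. -/
def letterObj {C : Type u} {N : ℕ} (τ φ : Fin N → C) (p : Fin N × Bool) : C :=
  cond p.2 (τ p.1) (φ p.1)

/-- The object of `C` given by a word in the letters `τ 1, φ 1, …, τ N, φ N`. -/
def wordObj {C : Type u} [Category.{v} C] [MonoidalCategory C] {N : ℕ}
    (τ φ : Fin N → C) (l : List (Fin N × Bool)) : C :=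
  tensorList (l.map (letterObj τ φ))

/-- The `i`-th subword of a word: the subsequence of letters carrying index `i`,
recorded as a list of booleans (`true` = `τ`, `false` = `φ`). -/
def subwordAt {N : ℕ} (l : List (Fin N × Bool)) (i : Fin N) : List Bool :=
  (l.filter fun p => p.1 = i).map Prod.snd

/-- A word is source-simple if each of its subwords is one of
`∅, τ, φ, τφ, φτ, τφτ`. -/
def SourceSimpleWord {N : ℕ} (l : List (Fin N × Bool)) : Prop :=
  ∀ i : Fin N, subwordAt l i ∈
    ([[], [true], [false], [true, false], [false, true], [true, false, true]] :
      List (List Bool))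

/-! ### Stable range one for finite-dimensional algebras -/

/-- The matrix-algebra case: `x a + b = 1` says that `ker a ∩ ker b = 0`. Choose `y` so that it
carries `b (ker a)` isomorphically onto a complement of `range a`; then `a + y b` is injective. -/
lemma stableRange_end {V : Type*} [AddCommGroup V] [Module ℂ V] [FiniteDimensional ℂ V]
    (x a b : Module.End ℂ V) (h : x * a + b = 1) : ∃ y, IsUnit (a + y * b) := by
  obtain ⟨D, hD⟩ := Submodule.exists_isCompl (LinearMap.range a)
  have hrank : Module.finrank ℂ (LinearMap.ker a) = Module.finrank ℂ D := by
    have h1 := LinearMap.finrank_range_add_finrank_ker a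
    have h2 := Submodule.finrank_add_eq_of_isCompl hD
    omega
  let e : LinearMap.ker a ≃ₗ[ℂ] D := LinearEquiv.ofFinrankEq _ _ hrank
  have hb : ∀ v, a v = 0 → b v = v := fun v hv => by
    have := LinearMap.congr_fun h v
    simpa [hv] using this
  obtain ⟨p, hp⟩ := (LinearMap.ker a).subtype.exists_leftInverse_of_injective
    (Submodule.ker_subtype _)
  refine ⟨D.subtype ∘ₗ e.toLinearMap ∘ₗ p, ?_⟩
  rw [Module.End.isUnit_iff, Function.Bijective, ← LinearMap.injective_iff_surjective, and_self,
    ← LinearMap.ker_eq_bot, LinearMap.ker_eq_bot']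
  intro v hv
  have hv' : a v + (e (p (b v)) : V) = 0 := hv
  have hav : a v = 0 := by
    refine Submodule.disjoint_def.1 hD.disjoint _ ⟨v, rfl⟩ ?_
    rw [eq_neg_of_add_eq_zero_left hv']
    exact D.neg_mem (e _).2
  have hpv : p v = ⟨v, hav⟩ := LinearMap.congr_fun hp (⟨v, hav⟩ : LinearMap.ker a)
  rw [hav, zero_add, hb v hav, hpv] at hv'
  have := e.map_eq_zero_iff.1 (Subtype.ext hv' : e ⟨v, hav⟩ = 0)
  exact congrArg Subtype.val this

/-- Stable range one passes to finite products of matrix algebras. -/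
lemma stableRange_pi_matrix {n : ℕ} {d : Fin n → ℕ}
    (x a b : Π i, Matrix (Fin (d i)) (Fin (d i)) ℂ) (h : x * a + b = 1) :
    ∃ y, IsUnit (a + y * b) := by
  have key : ∀ i, ∃ y : Matrix (Fin (d i)) (Fin (d i)) ℂ, IsUnit (a i + y * b i) := fun i => by
    let e := Matrix.toLinAlgEquiv' (R := ℂ) (n := Fin (d i))
    obtain ⟨y, hy⟩ := stableRange_end (e (x i)) (e (a i)) (e (b i)) (by
      rw [← map_mul, ← map_add, ← map_one e]
      exact congrArg e (congrFun h i))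
    refine ⟨e.symm y, ?_⟩
    simpa using hy.map e.symm
  choose y hy using key
  exact ⟨y, Pi.isUnit_iff.2 hy⟩

/-- Stable range one holds for a finite-dimensional algebra: by Wedderburn–Artin it holds modulo the
Jacobson radical, and units lift because the radical is nilpotent. -/
lemma stableRange_of_finiteDimensional {A : Type*} [Ring A] [Algebra ℂ A]
    [FiniteDimensional ℂ A] (x a b : A) (h : x * a + b = 1) : ∃ y, IsUnit (a + y * b) := by
  have : IsArtinianRing A := IsArtinianRing.of_finite ℂ A
  let J := Ring.jacobson A
  obtain ⟨n, d, -, ⟨e⟩⟩ :=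
    IsSemisimpleRing.exists_algEquiv_pi_matrix_of_isAlgClosed ℂ (A ⧸ J)
  let q : A →+* A ⧸ J := Ideal.Quotient.mk J
  obtain ⟨y, hy⟩ := stableRange_pi_matrix (e (q x)) (e (q a)) (e (q b)) (by
    rw [← map_mul, ← map_add, ← map_mul, ← map_add, h, map_one, map_one])
  obtain ⟨y', hy'⟩ := Ideal.Quotient.mk_surjective (e.symm y)
  refine ⟨y', ?_⟩
  have hq : IsUnit (q (a + y' * b)) := by
    have := hy.map e.symm
    rw [map_add, map_mul, ← hy'] at this
    simpa [q] using this
  -- units lift modulo the nilpotent ideal `J`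
  have lift : ∀ z : A, q z = 1 → IsUnit z := fun z hz => by
    obtain ⟨m, hm⟩ := IsSemiprimaryRing.isNilpotent (R := A)
    have hzJ : z - 1 ∈ J := Ideal.Quotient.eq.1 (hz.trans (map_one q).symm)
    have hnil : IsNilpotent (z - 1) := ⟨m, by
      have := Ideal.pow_mem_pow hzJ m
      rw [hm] at this
      simpa using this⟩
    simpa using hnil.isUnit_add_one
  obtain ⟨u, hu⟩ := hq
  obtain ⟨w, hw⟩ := Ideal.Quotient.mk_surjective (↑u⁻¹ : A ⧸ J)
  have h1 := lift ((a + y' * b) * w) (by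
    rw [map_mul, ← hu]; exact hw ▸ u.mul_inv)
  exact isUnit_of_mul_isUnit_left h1

/-! ### Cancellation in the category -/

section
variable {C : Type u} [Category.{v} C] [Preadditive C] [Linear ℂ C] [HasFiniteBiproducts C]

/-- Cancellation of direct summands. Stable range one for `End Z` turns the `Z ⟶ Z` entry of the
given isomorphism into an isomorphism by an elementary operation, and then
Gaussian elimination applies. -/
lemma biprod_cancel (hfd : ∀ X Y : C, FiniteDimensional ℂ (X ⟶ Y)) {X Y Z : C}
    (h : Nonempty (Z ⊞ X ≅ Z ⊞ Y)) : Nonempty (X ≅ Y) := by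
  obtain ⟨f⟩ := h
  have : FiniteDimensional ℂ (End Z) := hfd Z Z
  let f₁₁ : End Z := biprod.inl ≫ f.hom ≫ biprod.fst
  let f₁₂ : Z ⟶ Y := biprod.inl ≫ f.hom ≫ biprod.snd
  let g₁₁ : End Z := biprod.inl ≫ f.inv ≫ biprod.fst
  let g₂₁ : Y ⟶ Z := biprod.inr ≫ f.inv ≫ biprod.fst
  let b : End Z := f₁₂ ≫ g₂₁
  have hrel : g₁₁ * f₁₁ + b = 1 := by
    change (biprod.inl ≫ f.hom ≫ biprod.fst) ≫ (biprod.inl ≫ f.inv ≫ biprod.fst) +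
      (biprod.inl ≫ f.hom ≫ biprod.snd) ≫ (biprod.inr ≫ f.inv ≫ biprod.fst) = 𝟙 Z
    have : biprod.inl ≫ f.hom ≫ (biprod.fst ≫ biprod.inl + biprod.snd ≫ biprod.inr) ≫
        f.inv ≫ biprod.fst = 𝟙 Z := by
      simp
    simpa [-biprod.total] using this
  obtain ⟨y, hy⟩ := stableRange_of_finiteDimensional g₁₁ f₁₁ b hrel
  let F : Z ⊞ X ≅ Z ⊞ Y := f ≪≫ Biprod.unipotentLower (g₂₁ ≫ y)
  have hF : biprod.inl ≫ F.hom ≫ biprod.fst = f₁₁ + y * b := by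
    change _ = biprod.inl ≫ f.hom ≫ biprod.fst + (f₁₂ ≫ g₂₁) ≫ y
    simp [F, f₁₂, Biprod.ofComponents]
  have : IsIso (biprod.inl ≫ F.hom ≫ biprod.fst) := by
    rw [hF]; exact (isUnit_iff_isIso _).1 hy
  exact ⟨Biprod.isoElim F⟩
end

section
variable {C : Type u} [Category.{v} C] [MonoidalCategory C] [Preadditive C]
  [HasFiniteBiproducts C] [RigidCategory C]

/-- Tensoring on the right is a left adjoint by rigidity, hence additive. -/
lemma biprod_tensor_iso (X A B : C) : Nonempty ((A ⊞ B) ⊗ X ≅ (A ⊗ X) ⊞ (B ⊗ X)) := by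
  have : (tensorRight X).IsLeftAdjoint := (tensorRightAdjunction X Xᘁ).isLeftAdjoint
  have : PreservesBinaryBiproducts (tensorRight X) :=
    preservesBinaryBiproducts_of_preservesBinaryCoproducts _
  exact ⟨(tensorRight X).mapBiprod A B⟩

lemma tensor_biprod_iso (X A B : C) : Nonempty (X ⊗ (A ⊞ B) ≅ (X ⊗ A) ⊞ (X ⊗ B)) := by
  have : (tensorLeft X).IsLeftAdjoint := (tensorLeftAdjunction (ᘁX) X).isLeftAdjoint
  have : PreservesBinaryBiproducts (tensorLeft X) :=
    preservesBinaryBiproducts_of_preservesBinaryCoproducts _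
  exact ⟨(tensorLeft X).mapBiprod A B⟩

lemma fib_tensor_left {T : C} (hT : IsFibonacci T) (X : C) :
    Nonempty (T ⊗ T ⊗ X ≅ (T ⊗ X) ⊞ X) := by
  obtain ⟨-, -, ⟨e⟩⟩ := hT
  obtain ⟨k⟩ := biprod_tensor_iso X (𝟙_ C) T
  exact ⟨(α_ T T X).symm ≪≫ whiskerRightIso e X ≪≫ k ≪≫ biprod.mapIso (λ_ X) (Iso.refl _) ≪≫
    biprod.braiding _ _⟩

lemma fib_tensor_right {T : C} (hT : IsFibonacci T) (X : C) :
    Nonempty ((X ⊗ T) ⊗ T ≅ (X ⊗ T) ⊞ X) := by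
  obtain ⟨-, -, ⟨e⟩⟩ := hT
  obtain ⟨k⟩ := tensor_biprod_iso X (𝟙_ C) T
  exact ⟨α_ X T T ≪≫ whiskerLeftIso X e ≪≫ k ≪≫ biprod.mapIso (ρ_ X) (Iso.refl _) ≪≫
    biprod.braiding _ _⟩

/-- A Fibonacci object is cancellable for `⊗` on isomorphism classes: `T ⊗ X` determines
`T ⊗ T ⊗ X ≅ (T ⊗ X) ⊞ X`, hence `X`. -/
lemma fib_isRegular [Linear ℂ C] (hfd : ∀ X Y : C, FiniteDimensional ℂ (X ⟶ Y)) {T : C}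
    (hT : IsFibonacci T) : IsRegular (toSkeleton T) := by
  constructor
  · rintro ⟨X⟩ ⟨Y⟩ h
    change toSkeleton T * toSkeleton X = toSkeleton T * toSkeleton Y at h
    rw [← Skeleton.toSkeleton_tensorObj, ← Skeleton.toSkeleton_tensorObj,
      toSkeleton_eq_toSkeleton_iff] at h
    obtain ⟨e⟩ := h
    obtain ⟨i⟩ := fib_tensor_left hT X
    obtain ⟨j⟩ := fib_tensor_left hT Y
    exact toSkeleton_eq_toSkeleton_iff.2 (biprod_cancel hfd
      ⟨i.symm ≪≫ whiskerLeftIso T e ≪≫ j ≪≫ biprod.mapIso e.symm (Iso.refl _)⟩)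
  · rintro ⟨X⟩ ⟨Y⟩ h
    change toSkeleton X * toSkeleton T = toSkeleton Y * toSkeleton T at h
    rw [← Skeleton.toSkeleton_tensorObj, ← Skeleton.toSkeleton_tensorObj,
      toSkeleton_eq_toSkeleton_iff] at h
    obtain ⟨e⟩ := h
    obtain ⟨i⟩ := fib_tensor_right hT X
    obtain ⟨j⟩ := fib_tensor_right hT Y
    exact toSkeleton_eq_toSkeleton_iff.2 (biprod_cancel hfd
      ⟨i.symm ≪≫ whiskerRightIso e T ≪≫ j ≪≫ biprod.mapIso e.symm (Iso.refl _)⟩)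

/-- If `T` and `F` also commute, then `T F ⊞ F ≅ T T F ≅ T F T ≅ F T F ≅ F F T ≅ T F ⊞ T`. -/
lemma fib_iso_of_commute [Linear ℂ C] (hfd : ∀ X Y : C, FiniteDimensional ℂ (X ⟶ Y)) {T F : C}
    (hT : IsFibonacci T) (hF : IsFibonacci F) (hb : Nonempty (T ⊗ F ⊗ T ≅ F ⊗ T ⊗ F))
    (hc : Nonempty (T ⊗ F ≅ F ⊗ T)) : Nonempty (T ≅ F) := by
  obtain ⟨b⟩ := hb
  obtain ⟨c⟩ := hc
  obtain ⟨i⟩ := fib_tensor_left hT F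
  obtain ⟨j⟩ := fib_tensor_left hF T
  exact biprod_cancel hfd (Z := T ⊗ F) ⟨biprod.mapIso c (Iso.refl _) ≪≫ j.symm ≪≫
    whiskerLeftIso F c.symm ≪≫ b.symm ≪≫ whiskerLeftIso T c.symm ≪≫ i⟩

end

/-! ### Braid words in a monoid -/

section
variable {M : Type*} [Monoid M]

/-- Two cancellable elements of a monoid that satisfy the braid relation. -/
structure BraidPair (t f : M) : Prop where
  left : IsRegular t
  right : IsRegular f
  braid : t * f * t = f * t * f

lemma BraidPair.swap {t f : M} (h : BraidPair t f) : BraidPair f t :=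
  ⟨h.right, h.left, h.braid.symm⟩

/-- Cancellable elements commuting with both `t` and `f`. -/
structure CentralFor (t f c : M) : Prop where
  reg : IsRegular c
  left : Commute c t
  right : Commute c f

lemma CentralFor.swap {t f c : M} (h : CentralFor t f c) : CentralFor f t c :=
  ⟨h.reg, h.right, h.left⟩

variable {t f c d : M}

/-! Up to exchanging `t` with `f` and rewriting `t f t` as `f t f`, the six lemmas below cover the
equations `a c = b d` between source-simple words `a ≠ b`, a common first letter being cancelled.
Each proof moves `c` and `d` past a letter to get a relation between `t` and `f` alone. -/

lemma comm_of_one_t (hc : CentralFor t f c) (hd : CentralFor t f d)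
    (h : c = t * d) : t * f = f * t := by
  apply hd.reg.right
  show t * f * d = f * t * d
  rw [mul_assoc, ← hd.right.eq, ← mul_assoc, ← h, mul_assoc, ← h, hc.right.eq]

lemma comm_of_one_tf (hp : BraidPair t f) (hc : CentralFor t f c) (hd : CentralFor t f d)
    (h : c = t * f * d) : t * f = f * t := by
  apply hp.left.left
  apply hd.reg.right
  show t * (t * f) * d = t * (f * t) * d
  calc t * (t * f) * d = t * c := by rw [h]; simp only [mul_assoc]
    _ = c * t := hc.left.eq.symm
    _ = t * f * (d * t) := by rw [h]; simp only [mul_assoc]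
    _ = _ := by rw [hd.left.eq]; simp only [mul_assoc]

lemma comm_of_one_tft (hp : BraidPair t f) (hc : CentralFor t f c) (hd : CentralFor t f d)
    (h : c = t * f * t * d) : t * f = f * t := by
  have h1 : t * (f * t * t) = t * (t * f * t) := by
    apply hd.reg.right
    show t * (f * t * t) * d = t * (t * f * t) * d
    calc t * (f * t * t) * d = t * f * t * (t * d) := by simp only [mul_assoc]
      _ = c * t := by rw [← hd.left.eq, h]; simp only [mul_assoc]
      _ = t * c := hc.left.eq
      _ = _ := by rw [h]; simp only [mul_assoc]
  have h2 : f * t * t = f * t * f := (hp.left.left h1).trans hp.braid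
  have h3 : t = f := hp.left.left (hp.right.left (by simpa only [mul_assoc] using h2))
  rw [h3]

lemma comm_of_t_f (hc : CentralFor t f c) (hd : CentralFor t f d)
    (h : t * c = f * d) : t * f = f * t := by
  apply hd.reg.right
  show t * f * d = f * t * d
  rw [mul_assoc, ← h, mul_assoc f, ← hd.left.eq, ← mul_assoc f, ← h, mul_assoc, hc.left.eq]

lemma comm_of_t_ft (hp : BraidPair t f) (hc : CentralFor t f c) (hd : CentralFor t f d)
    (h : t * c = f * t * d) : t * f = f * t := by
  have h1 : f * t * f = f * t * t := by
    rw [← hp.braid]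
    apply hd.reg.right
    show t * f * t * d = f * t * t * d
    rw [mul_assoc t, mul_assoc t, ← h, mul_assoc _ t d, ← hd.left.eq, ← mul_assoc (f * t), ← h,
      mul_assoc, hc.left.eq]
  have h3 : f = t := hp.left.left (hp.right.left (by simpa only [mul_assoc] using h1))
  rw [h3]

lemma comm_of_tf_ft (hp : BraidPair t f) (hc : CentralFor t f c) (hd : CentralFor t f d)
    (h : t * f * c = f * t * d) : t * f = f * t := by
  -- `f (t f c) = t f t c = t f c t = f t d t`, so `t f c = t t d` and `f c = t d`
  have h1 : f * (t * (f * c)) = f * (t * (t * d)) :=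
    calc f * (t * (f * c)) = t * f * t * c := by rw [hp.braid]; simp only [mul_assoc]
      _ = t * f * c * t := by rw [mul_assoc _ t c, ← hc.left.eq, mul_assoc _ c t]
      _ = f * t * (d * t) := by rw [h]; simp only [mul_assoc]
      _ = _ := by rw [hd.left.eq]; simp only [mul_assoc]
  have h2 : f * c = t * d := hp.left.left (hp.right.left h1)
  exact (comm_of_t_f hc.swap hd.swap h2).symm

/-- If `a` and `b` are different source-simple words in `t` and `f` and `a c = b d` with `c`, `d`
cancellable and central for `t`, `f`, then `t` and `f` commute: `b⁻¹ a` would be central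
in the group generated by `t` and `f`. -/
lemma comm_of_words_eq (hp : BraidPair t f) (hc : CentralFor t f c) (hd : CentralFor t f d)
    {a b : List Bool}
    (ha : a ∈ ([[], [true], [false], [true, false], [false, true], [true, false, true]] :
      List (List Bool)))
    (hb : b ∈ ([[], [true], [false], [true, false], [false, true], [true, false, true]] :
      List (List Bool)))
    (hne : a ≠ b)
    (h : (a.map fun s => cond s t f).prod * c = (b.map fun s => cond s t f).prod * d) :
    t * f = f * t := by
  have lt : ∀ {x y : M}, t * x = t * y → x = y := fun h => hp.left.left h
  have lf : ∀ {x y : M}, f * x = f * y → x = y := fun h => hp.right.left h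
  have hbr' : ∀ x, t * (f * (t * x)) = f * (t * (f * x)) := fun x => by
    simpa only [mul_assoc] using congrArg (· * x) hp.braid
  simp only [List.mem_cons, List.not_mem_nil, or_false] at ha hb
  -- the equations in which the two words share no first letter, up to exchanging them
  have key : ∀ {c d : M}, CentralFor t f c → CentralFor t f d →
      (c = t * d ∨ c = f * d ∨ c = t * (f * d) ∨ c = f * (t * d) ∨ c = t * (f * (t * d)) ∨
      t * c = f * d ∨ t * c = f * (t * d) ∨ f * c = t * (f * d) ∨
      t * (f * c) = f * (t * d)) → t * f = f * t := by
    intro c d hc hd h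
    rcases h with h | h | h | h | h | h | h | h | h
    · exact comm_of_one_t hc hd h
    · exact (comm_of_one_t hc.swap hd.swap h).symm
    · exact comm_of_one_tf hp hc hd (by simpa only [mul_assoc] using h)
    · exact (comm_of_one_tf hp.swap hc.swap hd.swap (by simpa only [mul_assoc] using h)).symm
    · exact comm_of_one_tft hp hc hd (by simpa only [mul_assoc] using h)
    · exact comm_of_t_f hc hd h
    · exact comm_of_t_ft hp hc hd (by simpa only [mul_assoc] using h)
    · exact (comm_of_t_ft hp.swap hc.swap hd.swap (by simpa only [mul_assoc] using h)).symm
    · exact comm_of_tf_ft hp hc hd (by simpa only [mul_assoc] using h)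
  -- one equation for each unordered pair of words; a common first letter is cancelled, after
  -- replacing `t f t` by `f t f` where needed
  have full : ∀ {c d : M}, CentralFor t f c → CentralFor t f d →
      (c = t * d ∨ c = f * d ∨ c = t * (f * d) ∨ c = f * (t * d) ∨ c = t * (f * (t * d)) ∨
      t * c = f * d ∨ t * c = t * (f * d) ∨ t * c = f * (t * d) ∨ t * c = t * (f * (t * d)) ∨
      f * c = t * (f * d) ∨ f * c = f * (t * d) ∨ f * c = t * (f * (t * d)) ∨
      t * (f * c) = f * (t * d) ∨ t * (f * c) = t * (f * (t * d)) ∨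
      f * (t * c) = t * (f * (t * d))) → t * f = f * t := by
    intro c d hc hd h
    rcases h with h | h | h | h | h | h | h | h | h | h | h | h | h | h | h <;>
      refine key hc hd ?_
    · exact .inl h
    · exact .inr (.inl h)
    · exact .inr (.inr (.inl h))
    · exact .inr (.inr (.inr (.inl h)))
    · exact .inr (.inr (.inr (.inr (.inl h))))
    · exact .inr (.inr (.inr (.inr (.inr (.inl h)))))
    · exact .inr (.inl (lt h))
    · exact .inr (.inr (.inr (.inr (.inr (.inr (.inl h))))))
    · exact .inr (.inr (.inr (.inl (lt h))))
    · exact .inr (.inr (.inr (.inr (.inr (.inr (.inr (.inl h)))))))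
    · exact .inl (lf h)
    · exact .inr (.inr (.inl (lf (h.trans (hbr' d)))))
    · exact .inr (.inr (.inr (.inr (.inr (.inr (.inr (.inr h)))))))
    · exact .inl (lf (lt h))
    · exact .inr (.inl (lt (lf (h.trans (hbr' d)))))
  rcases ha with rfl | rfl | rfl | rfl | rfl | rfl <;>
    rcases hb with rfl | rfl | rfl | rfl | rfl | rfl <;>
    first
      | exact absurd rfl hne
      | (refine full hc hd ?_
         simp only [List.map_cons, List.map_nil, List.prod_cons, List.prod_nil, cond_true,
           cond_false, mul_one, one_mul, mul_assoc] at h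
         simp only [h, true_or, or_true]
         done)
      | (refine full hd hc ?_
         simp only [List.map_cons, List.map_nil, List.prod_cons, List.prod_nil, cond_true,
           cond_false, mul_one, one_mul, mul_assoc] at h
         simp only [h.symm, true_or, or_true])

/-- When letters of different indices commute, those of index `i` can be moved to the front. -/
lemma word_prod_split {N : ℕ} (g : Fin N × Bool → M)
    (hg : ∀ p q : Fin N × Bool, p.1 ≠ q.1 → Commute (g p) (g q)) (i : Fin N)
    (l : List (Fin N × Bool)) :
    (l.map g).prod = ((subwordAt l i).map fun s => g (i, s)).prod *
      ((l.filter fun p => p.1 ≠ i).map g).prod := by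
  induction l with
  | nil => simp [subwordAt]
  | cons p l ih =>
    by_cases h : p.1 = i
    · subst h
      simpa [subwordAt, mul_assoc] using congrArg (g p * ·) ih
    · have hcomm : Commute (g p) ((subwordAt l i).map fun s => g (i, s)).prod :=
        Commute.list_prod_right _ _ (by
          simp only [List.mem_map, forall_exists_index, and_imp]
          rintro _ s - rfl
          exact hg _ _ h)
      have hsub : subwordAt (p :: l) i = subwordAt l i := by simp [subwordAt, h]
      rw [hsub, List.map_cons, List.prod_cons, ih, ← mul_assoc, hcomm.eq]
      simp [h, mul_assoc]

end

/-! ### Words as elements of the monoid of isomorphism classes -/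

lemma toSkeleton_wordObj {C : Type u} [Category.{v} C] [MonoidalCategory C] {N : ℕ}
    (τ φ : Fin N → C) (l : List (Fin N × Bool)) :
    toSkeleton (wordObj τ φ l) = (l.map fun p => toSkeleton (letterObj τ φ p)).prod := by
  have : ∀ L : List C, toSkeleton (tensorList L) = (L.map toSkeleton).prod := fun L => by
    induction L with
    | nil => rfl
    | cons x L ih =>
      cases L with
      | nil => simp [tensorList]
      | cons y L => rw [tensorList, Skeleton.toSkeleton_tensorObj, ih]; simp
  rw [wordObj, this, List.map_map]
  rfl

/-- In a semisimple tensor category containing `2N` pairwise non-isomorphic Fibonacci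
objects `τ i, φ i` with `τ i ⊗ φ i ⊗ τ i ≅ φ i ⊗ τ i ⊗ φ i` and all cross pairs
⊗-commuting, non-identical source-simple words are non-isomorphic. -/
theorem tt3_source_simple_words_distinct (C : Type u) [Category.{v} C]
    [MonoidalCategory C] [Preadditive C] [Linear ℂ C] [HasFiniteBiproducts C]
    [RigidCategory C] [Simple (𝟙_ C)]
    (hfd : ∀ X Y : C, FiniteDimensional ℂ (X ⟶ Y))
    (hss : IsSemisimple C)
    (N : ℕ) (τ φ : Fin N → C)
    (hfibτ : ∀ i, IsFibonacci (τ i)) (hfibφ : ∀ i, IsFibonacci (φ i))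
    (hdist : ∀ p q : Fin N × Bool, p ≠ q →
      ¬ Nonempty (letterObj τ φ p ≅ letterObj τ φ q))
    (hbraid : ∀ i, Nonempty (τ i ⊗ φ i ⊗ τ i ≅ φ i ⊗ τ i ⊗ φ i))
    (hcomm : ∀ i j, i ≠ j →
      Nonempty (τ i ⊗ τ j ≅ τ j ⊗ τ i) ∧ Nonempty (τ i ⊗ φ j ≅ φ j ⊗ τ i) ∧
      Nonempty (φ i ⊗ τ j ≅ τ j ⊗ φ i) ∧ Nonempty (φ i ⊗ φ j ≅ φ j ⊗ φ i)) :
    ∀ l₁ l₂ : List (Fin N × Bool), SourceSimpleWord l₁ → SourceSimpleWord l₂ →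
      (¬ ∀ i : Fin N, subwordAt l₁ i = subwordAt l₂ i) →
      ¬ Nonempty (wordObj τ φ l₁ ≅ wordObj τ φ l₂) := by
  intro l₁ l₂ h₁ h₂ hne ⟨e⟩
  obtain ⟨i, hi⟩ := not_forall.1 hne
  let g : Fin N × Bool → Skeleton C := fun p => toSkeleton (letterObj τ φ p)
  have hreg : ∀ p, IsRegular (g p) := by
    rintro ⟨j, _ | _⟩
    · exact fib_isRegular hfd (hfibφ j)
    · exact fib_isRegular hfd (hfibτ j)
  have hg : ∀ p q : Fin N × Bool, p.1 ≠ q.1 → Commute (g p) (g q) := by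
    have tr : ∀ {X Y : C}, Nonempty (X ⊗ Y ≅ Y ⊗ X) →
        Commute (toSkeleton X) (toSkeleton Y) := fun h => by
      rw [commute_iff_eq, ← Skeleton.toSkeleton_tensorObj, ← Skeleton.toSkeleton_tensorObj]
      exact toSkeleton_eq_toSkeleton_iff.2 h
    rintro ⟨j, _ | _⟩ ⟨k, _ | _⟩ h
    · exact tr (hcomm j k h).2.2.2
    · exact tr (hcomm j k h).2.2.1
    · exact tr (hcomm j k h).2.1
    · exact tr (hcomm j k h).1
  have hp : BraidPair (g (i, true)) (g (i, false)) := by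
    refine ⟨hreg _, hreg _, ?_⟩
    have := toSkeleton_eq_toSkeleton_iff.2 (hbraid i)
    rw [Skeleton.toSkeleton_tensorObj, Skeleton.toSkeleton_tensorObj,
      Skeleton.toSkeleton_tensorObj, Skeleton.toSkeleton_tensorObj, ← mul_assoc, ← mul_assoc] at this
    exact this
  have hcent : ∀ l : List (Fin N × Bool), CentralFor (g (i, true)) (g (i, false))
      ((l.filter fun p => p.1 ≠ i).map g).prod := fun l => by
    refine ⟨?_, ?_, ?_⟩
    · generalize l.filter _ = L
      induction L with
      | nil => simpa using isRegular_one
      | cons p L ih => simpa using (hreg p).mul ih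
    all_goals
      refine Commute.list_prod_left _ _ fun x hx => ?_
      simp only [List.mem_map, List.mem_filter, decide_eq_true_eq] at hx
      obtain ⟨p, ⟨-, hpi⟩, rfl⟩ := hx
      exact hg _ _ hpi
  have heq : (l₁.map g).prod = (l₂.map g).prod := by
    rw [← toSkeleton_wordObj, ← toSkeleton_wordObj]
    exact toSkeleton_eq_toSkeleton_iff.2 ⟨e⟩
  rw [word_prod_split g hg i l₁, word_prod_split g hg i l₂] at heq
  have hgc : (fun s => g (i, s)) = fun s => cond s (g (i, true)) (g (i, false)) := by
    funext s; cases s <;> rfl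
  rw [hgc] at heq
  have hcomm_i := comm_of_words_eq hp (hcent l₁) (hcent l₂) (h₁ i) (h₂ i) hi heq
  refine hdist (i, true) (i, false) (by simp)
    (fib_iso_of_commute hfd (hfibτ i) (hfibφ i) (hbraid i) (toSkeleton_eq_toSkeleton_iff.1 ?_))
  rw [Skeleton.toSkeleton_tensorObj, Skeleton.toSkeleton_tensorObj]
  exact hcomm_i
end
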